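/- arXiv:1712.07432 — 2 statements merged into one kernel-verified Lean document; each statement's English description precedes it below -/
import Mathlib

section
/- (Inclusion–exclusion for big dual cones.) Let n = dim V. For every face A∨ of the dual arrangement H∨ and every x ∈ V: 1_{U(A∨)}(x) = Σ_{B∨} (−1)^{n − dim B∨} · 1_{V(B∨)}(x), the sum (with values in ℤ) ranging over the finitely many faces B∨ of H∨ with A∨ ≤ B∨, where 1_S denotes the indicator function of a set S and dim B∨ is the dimension of the linear span of B∨. -/
/-! Basic notions for a (central, essential) arrangement of hyperplanes `H`
in a finite-dimensional real vector space, its faces, flats, the dual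
arrangement and its faces, and the big/small dual cones. -/

/-- Two points `x`, `y` lie in the same face of the hyperplane arrangement `H`:
for every hyperplane `W ∈ H` and every linear functional `f` with kernel `W`,
either `f x · f y > 0` or `f x = f y = 0`. -/
def SameFace {V : Type*} [AddCommGroup V] [Module ℝ V]
    (H : Finset (Submodule ℝ V)) (x y : V) : Prop :=
  ∀ W ∈ H, ∀ f : V →ₗ[ℝ] ℝ, LinearMap.ker f = W →
    (0 < f x * f y ∨ (f x = 0 ∧ f y = 0))

/-- A face of the arrangement `H`: an equivalence class of the relation `SameFace`. -/
def IsFace {V : Type*} [AddCommGroup V] [Module ℝ V]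
    (H : Finset (Submodule ℝ V)) (A : Set V) : Prop :=
  ∃ x : V, A = {y | SameFace H x y}

/-- A chamber is an open face. -/
def IsChamber {V : Type*} [AddCommGroup V] [Module ℝ V] [TopologicalSpace V]
    (H : Finset (Submodule ℝ V)) (A : Set V) : Prop :=
  IsFace H A ∧ IsOpen A

/-- A flat of `H`: an intersection of a subfamily of the hyperplanes
(the empty subfamily gives all of `V`). -/
def IsFlat {V : Type*} [AddCommGroup V] [Module ℝ V]
    (H : Finset (Submodule ℝ V)) (L : Submodule ℝ V) : Prop :=
  ∃ J : Finset (Submodule ℝ V), J ⊆ H ∧ L = J.inf id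

/-- Two (continuous) linear functionals `f`, `g` lie in the same face of the dual
arrangement `H∨`: for every 1-dimensional flat `l` of `H` and every `x ∈ l`,
either `f x · g x > 0` or `f x = g x = 0`. -/
def DualSameFace {V : Type*} [NormedAddCommGroup V] [NormedSpace ℝ V]
    (H : Finset (Submodule ℝ V)) (f g : V →L[ℝ] ℝ) : Prop :=
  ∀ l : Submodule ℝ V, IsFlat H l → Module.finrank ℝ l = 1 →
    ∀ x ∈ l, (0 < f x * g x ∨ (f x = 0 ∧ g x = 0))

/-- A face of the dual arrangement `H∨` in the dual space. -/
def IsDualFace {V : Type*} [NormedAddCommGroup V] [NormedSpace ℝ V]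
    (H : Finset (Submodule ℝ V)) (A : Set (V →L[ℝ] ℝ)) : Prop :=
  ∃ f : V →L[ℝ] ℝ, A = {g | DualSameFace H f g}

/-- A chamber of the dual arrangement: an open dual face. -/
def IsDualChamber {V : Type*} [NormedAddCommGroup V] [NormedSpace ℝ V]
    (H : Finset (Submodule ℝ V)) (A : Set (V →L[ℝ] ℝ)) : Prop :=
  IsDualFace H A ∧ IsOpen A

/-- The big dual cone `U(A∨)` of a dual face `A∨`. -/
def bigCone {V : Type*} [NormedAddCommGroup V] [NormedSpace ℝ V]
    (A : Set (V →L[ℝ] ℝ)) : Set V :=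
  {x | ∀ f ∈ A, 0 ≤ f x}

/-- The small dual cone `V(A∨)` of a dual face `A∨`: the intersection of the big
dual cones of all dual chambers `B∨` with `A∨ ≤ B∨`. -/
def smallCone {V : Type*} [NormedAddCommGroup V] [NormedSpace ℝ V]
    (H : Finset (Submodule ℝ V)) (A : Set (V →L[ℝ] ℝ)) : Set V :=
  ⋂ B ∈ {B : Set (V →L[ℝ] ℝ) | IsDualChamber H B ∧ A ⊆ closure B}, bigCone B

open Classical in
/-- Weighted count of sign vectors realised on `O`. -/
noncomputable def eul {V : Type*} [NormedAddCommGroup V] [NormedSpace ℝ V] {n : ℕ}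
    (v : Fin n → V) (Z : Submodule ℝ V) (O : Set (V →L[ℝ] ℝ)) : ℤ :=
  ∑ σ : Fin n → SignType, if (∃ f ∈ O, ∀ i, SignType.sign (f (v i)) = σ i) then
    (-1 : ℤ) ^ Module.finrank ℝ (Z ⊔ Submodule.span ℝ (v '' {i | σ i = 0}) : Submodule ℝ V) else 0

structure ROpen {V : Type*} [NormedAddCommGroup V] [NormedSpace ℝ V]
    (Z : Submodule ℝ V) (O : Set (V →L[ℝ] ℝ)) : Prop where
  conv : Convex ℝ O
  van : ∀ f ∈ O, ∀ z ∈ Z, f z = 0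
  op : ∀ f ∈ O, ∀ g : V →L[ℝ] ℝ, (∀ z ∈ Z, g z = 0) → ∀ᶠ t in nhds (0:ℝ), f + t • g ∈ O

section
variable {V : Type*} [NormedAddCommGroup V] [NormedSpace ℝ V]

theorem eul_empty {n : ℕ} (v : Fin n → V) (Z : Submodule ℝ V) : eul v Z ∅ = 0 := by
  simp [eul]

theorem sign_eventually (u : V) (f g : V →L[ℝ] ℝ) (h : f u ≠ 0) :
    ∀ᶠ t in nhds (0:ℝ), SignType.sign ((f + t • g) u) = SignType.sign (f u) := by
  have hc : Continuous (fun t : ℝ => (f + t • g) u) := by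
    simp only [add_apply, smul_apply]; fun_prop
  have h0 : (f + (0:ℝ) • g) u = f u := by simp
  rcases lt_or_gt_of_ne h with h | h
  · have : ∀ᶠ t in nhds (0:ℝ), (f + t • g) u < 0 :=
      hc.continuousAt.eventually_lt continuousAt_const (by simpa using h)
    filter_upwards [this] with t ht
    rw [sign_neg ht, sign_neg h]
  · have : ∀ᶠ t in nhds (0:ℝ), 0 < (f + t • g) u :=
      continuousAt_const.eventually_lt hc.continuousAt (by simpa using h)
    filter_upwards [this] with t ht
    rw [sign_pos ht, sign_pos h]

theorem convex_sign (u : V) (s : SignType) :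
    Convex ℝ {f : V →L[ℝ] ℝ | SignType.sign (f u) = s} := by
  intro f hf g hg a b ha hb hab
  simp only [Set.mem_ofPred_eq] at *
  have e : (a • f + b • g) u = a * f u + b * g u := by simp
  rw [e]
  rcases s with _ | _ | _
  · change _ = (0:SignType) at hf hg ⊢
    rw [sign_eq_zero_iff] at *
    simp [hf, hg]
  · change _ = (-1:SignType) at hf hg ⊢
    rw [sign_eq_neg_one_iff] at *
    rcases ha.eq_or_lt with rfl | ha
    · have : b = 1 := by linarith
      subst this; simpa using hg
    · nlinarith [mul_neg_of_pos_of_neg ha hf, mul_nonpos_of_nonneg_of_nonpos hb hg.le]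
  · change _ = (1:SignType) at hf hg ⊢
    rw [sign_eq_one_iff] at *
    rcases ha.eq_or_lt with rfl | ha
    · have : b = 1 := by linarith
      subst this; simpa using hg
    · nlinarith [mul_pos ha hf, mul_nonneg hb hg.le]

theorem ROpen.inter_ne {Z : Submodule ℝ V} {O : Set (V →L[ℝ] ℝ)} (h : ROpen Z O) (u : V)
    (s : SignType) (hs : s ≠ 0) : ROpen Z (O ∩ {f | SignType.sign (f u) = s}) where
  conv := h.conv.inter (convex_sign u s)
  van f hf := h.van f hf.1
  op f hf g hg := by
    have : f u ≠ 0 := by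
      intro h0; apply hs; rw [← hf.2, h0, sign_zero]
    filter_upwards [h.op f hf.1 g hg, sign_eventually u f g this] with t h1 h2
    exact ⟨h1, h2.trans hf.2⟩

theorem ROpen.inter_zero {Z : Submodule ℝ V} {O : Set (V →L[ℝ] ℝ)} (h : ROpen Z O) (u : V) :
    ROpen (Z ⊔ Submodule.span ℝ {u}) (O ∩ {f | SignType.sign (f u) = 0}) where
  conv := h.conv.inter (convex_sign u 0)
  van f hf z hz := by
    obtain ⟨y, hy, w, hw, rfl⟩ := Submodule.mem_sup.1 hz
    obtain ⟨c, rfl⟩ := Submodule.mem_span_singleton.1 hw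
    have := sign_eq_zero_iff.1 hf.2
    simp [h.van f hf.1 y hy, this]
  op f hf g hg := by
    have hgu : g u = 0 := hg u (Submodule.mem_sup_right (Submodule.mem_span_singleton_self u))
    filter_upwards [h.op f hf.1 g (fun z hz => hg z (Submodule.mem_sup_left hz))] with t h1
    refine ⟨h1, ?_⟩
    have := sign_eq_zero_iff.1 hf.2
    simp [this, hgu]

theorem eul_cons {n : ℕ} (v : Fin (n+1) → V) (Z : Submodule ℝ V) (O : Set (V →L[ℝ] ℝ)) :
    eul v Z O = eul (Fin.tail v) (Z ⊔ Submodule.span ℝ {v 0}) (O ∩ {f | SignType.sign (f (v 0)) = 0})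
      + eul (Fin.tail v) Z (O ∩ {f | SignType.sign (f (v 0)) = 1})
      + eul (Fin.tail v) Z (O ∩ {f | SignType.sign (f (v 0)) = -1}) := by
  classical
  have key : ∀ (s : SignType) (Z' : Submodule ℝ V),
      (∀ σ : Fin n → SignType, Z ⊔ Submodule.span ℝ (v '' {i | (Fin.cons s σ : Fin (n+1) → SignType) i = 0})
        = Z' ⊔ Submodule.span ℝ (Fin.tail v '' {i | σ i = 0})) →
      ∑ σ : Fin n → SignType, (if (∃ f ∈ O, ∀ i, SignType.sign (f (v i)) = (Fin.cons s σ : Fin (n+1) → SignType) i) then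
    (-1 : ℤ) ^ Module.finrank ℝ (Z ⊔ Submodule.span ℝ (v '' {i | (Fin.cons s σ : Fin (n+1) → SignType) i = 0}) : Submodule ℝ V) else 0)
      = eul (Fin.tail v) Z' (O ∩ {f | SignType.sign (f (v 0)) = s}) := by
    intro s Z' h
    unfold eul
    refine Finset.sum_congr rfl fun σ _ => ?_
    rw [h σ]
    refine if_congr ?_ rfl rfl
    simp only [Fin.forall_fin_succ, Fin.cons_zero, Fin.cons_succ, Fin.tail, Set.mem_inter_iff,
      Set.mem_ofPred_eq, and_assoc]
  have hne : ∀ s : SignType, s ≠ 0 → ∀ σ : Fin n → SignType,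
      v '' {i | (Fin.cons s σ : Fin (n+1) → SignType) i = 0} = Fin.tail v '' {i | σ i = 0} := by
    intro s hs σ
    ext y
    simp [Fin.exists_fin_succ, hs, Fin.tail]
  have hz : ∀ σ : Fin n → SignType,
      v '' {i | (Fin.cons 0 σ : Fin (n+1) → SignType) i = 0} = {v 0} ∪ Fin.tail v '' {i | σ i = 0} := by
    intro σ
    ext y
    simp [Fin.exists_fin_succ, Fin.tail, eq_comm]
  rw [← key 0 (Z ⊔ Submodule.span ℝ {v 0}) (fun σ => by rw [hz, Submodule.span_union, sup_assoc]),
    ← key 1 Z (fun σ => by rw [hne 1 (by decide)]), ← key (-1) Z (fun σ => by rw [hne (-1) (by decide)])]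
  unfold eul
  rw [← (Fin.consEquiv (fun _ : Fin (n+1) => SignType)).sum_comp, Fintype.sum_prod_type]
  have hu : (Finset.univ : Finset SignType) = {0, 1, -1} := by decide
  rw [hu, Finset.sum_insert (by decide), Finset.sum_insert (by decide), Finset.sum_singleton, ← add_assoc]
  rfl

variable [FiniteDimensional ℝ V]

theorem exists_sep (Z : Submodule ℝ V) (u : V) (hu : u ∉ Z) :
    ∃ g : V →L[ℝ] ℝ, (∀ z ∈ Z, g z = 0) ∧ 0 < g u := by
  obtain ⟨f, hf, hfZ⟩ := Submodule.exists_le_ker_of_notMem hu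
  rcases lt_or_gt_of_ne hf with h | h
  · refine ⟨LinearMap.toContinuousLinearMap (-f), fun z hz => ?_, by simpa using h⟩
    have : f z = 0 := hfZ hz
    simp [this]
  · refine ⟨LinearMap.toContinuousLinearMap f, fun z hz => ?_, by simpa using h⟩
    exact hfZ hz

open Classical in
theorem eul_open : ∀ {n : ℕ} (v : Fin n → V) (Z : Submodule ℝ V) (O : Set (V →L[ℝ] ℝ)),
    ROpen Z O → eul v Z O = if O.Nonempty then (-1 : ℤ) ^ Module.finrank ℝ Z else 0
  | 0, v, Z, O, h => by
    simp only [eul, Fintype.sum_unique]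
    refine if_congr (by simp [Set.Nonempty]) ?_ rfl
    have hb : ∀ T : Set (Fin 0), Z ⊔ Submodule.span ℝ (v '' T) = Z := fun T => by
      rw [Set.eq_empty_of_isEmpty T]; simp
    rw [hb]
  | n+1, v, Z, O, h => by
    rw [eul_cons, eul_open _ _ _ (h.inter_zero (v 0)), eul_open _ _ _ (h.inter_ne (v 0) 1 (by decide)),
      eul_open _ _ _ (h.inter_ne (v 0) (-1) (by decide))]
    by_cases hO : O.Nonempty
    swap
    · rw [Set.not_nonempty_iff_eq_empty] at hO
      simp [hO]
    rw [if_pos hO]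
    by_cases hv : v 0 ∈ Z
    · have h0 : Z ⊔ Submodule.span ℝ {v 0} = Z := by
        rw [sup_eq_left, Submodule.span_singleton_le_iff_mem]; exact hv
      have hs : ∀ f ∈ O, SignType.sign (f (v 0)) = 0 := fun f hf => by rw [h.van f hf _ hv, sign_zero]
      have h1 : O ∩ {f | SignType.sign (f (v 0)) = 0} = O := by
        ext f; simp only [Set.mem_inter_iff, Set.mem_ofPred_eq]; exact ⟨fun h => h.1, fun h => ⟨h, hs f h⟩⟩
      have h2 : ∀ s : SignType, s ≠ 0 → ¬ (O ∩ {f | SignType.sign (f (v 0)) = s}).Nonempty := by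
        rintro s hs' ⟨f, hf, hf'⟩
        exact hs' (hf'.symm.trans (hs f hf))
      rw [h0, h1, if_pos hO, if_neg (h2 1 (by decide)), if_neg (h2 (-1) (by decide))]; simp
    · have hr : Module.finrank ℝ (Z ⊔ Submodule.span ℝ {v 0} : Submodule ℝ V) = Module.finrank ℝ Z + 1 := by
        have hne : v 0 ≠ 0 := fun h => hv (h ▸ Z.zero_mem)
        have := Submodule.finrank_sup_add_finrank_inf_eq Z (Submodule.span ℝ {v 0})
        rw [finrank_span_singleton hne, disjoint_iff.1 ((Submodule.disjoint_span_singleton' hne).2 hv),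
          finrank_bot] at this
        omega
      rw [hr, pow_succ]
      obtain ⟨g, hgZ, hg⟩ := exists_sep Z (v 0) hv
      by_cases h0 : (O ∩ {f | SignType.sign (f (v 0)) = 0}).Nonempty
      · obtain ⟨f, hf, hf0⟩ := h0
        have hf0' : f (v 0) = 0 := sign_eq_zero_iff.1 hf0
        have e1 := h.op f hf g hgZ
        have hp : ∃ t > (0:ℝ), f + t • g ∈ O :=
          ((eventually_nhdsWithin_of_eventually_nhds (s := Set.Ioi 0) e1).and (self_mem_nhdsWithin)).exists.imp (fun t ht => ⟨ht.2, ht.1⟩)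
        have hm : ∃ t < (0:ℝ), f + t • g ∈ O :=
          ((eventually_nhdsWithin_of_eventually_nhds (s := Set.Iio 0) e1).and (self_mem_nhdsWithin)).exists.imp (fun t ht => ⟨ht.2, ht.1⟩)
        obtain ⟨t, ht, hto⟩ := hp
        obtain ⟨r, hr, hro⟩ := hm
        have h3 : SignType.sign ((f + r • g) (v 0)) = -1 := by
          rw [sign_eq_neg_one_iff]
          simp [hf0', mul_neg_of_neg_of_pos hr hg]
        have h4 : SignType.sign ((f + t • g) (v 0)) = 1 := by
          rw [sign_eq_one_iff]
          simp [hf0', mul_pos ht hg]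
        rw [if_pos ⟨f, hf, hf0⟩, if_pos ⟨_, hto, h4⟩, if_pos ⟨_, hro, h3⟩]
        ring
      · rw [if_neg h0]
        have key : ∀ f ∈ O, ∀ f' ∈ O, 0 < f (v 0) → f' (v 0) < 0 → False := by
          intro f hf f' hf' h1 h2
          apply h0
          refine ⟨(-f' (v 0) / (f (v 0) - f' (v 0))) • f + (f (v 0) / (f (v 0) - f' (v 0))) • f',
            h.conv hf hf' ?_ ?_ ?_, ?_⟩
          · exact div_nonneg (by linarith) (by linarith)
          · exact div_nonneg (by linarith) (by linarith)
          · rw [← add_div, div_eq_one_iff_eq (by linarith)]; ring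
          · simp only [Set.mem_ofPred_eq, sign_eq_zero_iff]
            simp only [add_apply, smul_apply, smul_eq_mul]
            ring
        obtain ⟨f, hf⟩ := hO
        rcases lt_trichotomy (f (v 0)) 0 with h1 | h1 | h1
        · rw [if_neg, if_pos ⟨f, hf, sign_neg h1⟩]
          · ring
          · rintro ⟨f', hf', h2⟩
            exact key f' hf' f hf (sign_eq_one_iff.1 h2) h1
        · exact absurd ⟨f, hf, by simp [h1]⟩ h0
        · rw [if_pos ⟨f, hf, sign_pos h1⟩, if_neg]
          · ring
          · rintro ⟨f', hf', h2⟩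
            exact key f hf f' hf' h1 (sign_eq_neg_one_iff.1 h2)
end

section
variable {V : Type*} [NormedAddCommGroup V] [NormedSpace ℝ V]

noncomputable def sg {n : ℕ} (v : Fin n → V) (f : V →L[ℝ] ℝ) : Fin n → SignType :=
  fun i => SignType.sign (f (v i))

def lev {n : ℕ} (α β : Fin n → SignType) : Prop := ∀ i, α i ≠ 0 → β i = α i

noncomputable def wt {n : ℕ} (v : Fin n → V) (σ : Fin n → SignType) : ℤ :=
  (-1 : ℤ) ^ Module.finrank ℝ (Submodule.span ℝ (v '' {i | σ i = 0}))

theorem lev.trans {n : ℕ} {α β γ : Fin n → SignType} (h : lev α β) (h' : lev β γ) : lev α γ := by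
  intro i hi
  rw [h' i (by rw [h i hi]; exact hi), h i hi]

theorem lev.antisymm {n : ℕ} {α β : Fin n → SignType} (h : lev α β) (h' : lev β α) : α = β := by
  ext1 i
  by_cases hi : α i = 0
  · by_cases hj : β i = 0
    · rw [hi, hj]
    · exact h' i hj
  · exact (h i hi).symm

theorem lev.refl {n : ℕ} (α : Fin n → SignType) : lev α α := fun _ _ => rfl

theorem wt_sq {n : ℕ} (v : Fin n → V) (σ : Fin n → SignType) : wt v σ * wt v σ = 1 := by
  unfold wt
  rw [← mul_pow]; simp

open Classical in
theorem eul_bot {n : ℕ} (v : Fin n → V) (O : Set (V →L[ℝ] ℝ)) :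
    eul v ⊥ O = ∑ σ : Fin n → SignType, if (∃ f ∈ O, sg v f = σ) then wt v σ else 0 := by
  unfold eul wt
  refine Finset.sum_congr rfl fun σ _ => ?_
  rw [bot_sup_eq]
  refine if_congr ?_ rfl rfl
  simp only [sg, funext_iff]

theorem eul_split {n : ℕ} (v : Fin n → V) (O Q : Set (V →L[ℝ] ℝ))
    (hq : ∀ f g, sg v f = sg v g → f ∈ Q → g ∈ Q) :
    eul v ⊥ O = eul v ⊥ (O ∩ Q) + eul v ⊥ (O ∩ Qᶜ) := by
  classical
  simp only [eul_bot]
  rw [← Finset.sum_add_distrib]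
  refine Finset.sum_congr rfl fun σ _ => ?_
  by_cases h1 : ∃ f ∈ O ∩ Q, sg v f = σ
  · obtain ⟨f, hf, hs⟩ := h1
    rw [if_pos ⟨f, hf.1, hs⟩, if_pos ⟨f, hf, hs⟩, if_neg, add_zero]
    rintro ⟨g, hg, hs'⟩
    exact hg.2 (hq f g (hs.trans hs'.symm) hf.2)
  · rw [if_neg h1, zero_add]
    refine if_congr ?_ rfl rfl
    constructor
    · rintro ⟨f, hf, hs⟩
      exact ⟨f, ⟨hf, fun h => h1 ⟨f, ⟨hf, h⟩, hs⟩⟩, hs⟩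
    · rintro ⟨f, hf, hs⟩
      exact ⟨f, hf.1, hs⟩

theorem ROpen.of_open {O : Set (V →L[ℝ] ℝ)} (h : IsOpen O) (hc : Convex ℝ O) :
    ROpen (⊥ : Submodule ℝ V) O where
  conv := hc
  van f _ z hz := by rw [(Submodule.mem_bot ℝ).1 hz, map_zero]
  op f hf g _ := by
    have hcont : Continuous (fun t : ℝ => f + t • g) := by fun_prop
    exact hcont.continuousAt.eventually_mem (h.mem_nhds (by simpa using hf))

theorem isOpen_half (u : V) (s : ℝ) : IsOpen {f : V →L[ℝ] ℝ | s * f u < 0} := by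
  refine isOpen_lt ?_ continuous_const
  fun_prop

theorem convex_half (u : V) (s : ℝ) : Convex ℝ {f : V →L[ℝ] ℝ | s * f u < 0} := by
  refine convex_halfSpace_lt ⟨?_, ?_⟩ 0
  · intro f g; simp [mul_add]
  · intro c f; simp; ring

theorem isOpen_star {n : ℕ} (v : Fin n → V) (α : Fin n → SignType) :
    IsOpen {f : V →L[ℝ] ℝ | lev α (sg v f)} := by
  have : {f : V →L[ℝ] ℝ | lev α (sg v f)} = ⋂ i, {f | α i ≠ 0 → sg v f i = α i} := by
    ext f; simp [lev]
  rw [this]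
  refine isOpen_iInter_of_finite fun i => ?_
  by_cases h : α i = 0
  · simp [h]
  · have h2 : α i = 1 ∨ α i = -1 := by
      revert h; generalize α i = s; revert s; decide
    rcases h2 with h2 | h2
    · have : {f : V →L[ℝ] ℝ | α i ≠ 0 → sg v f i = α i} = {f | (-1) * f (v i) < 0} := by
        ext f; simp [h2, sg, sign_eq_one_iff]
      rw [this]; exact isOpen_half _ _
    · have : {f : V →L[ℝ] ℝ | α i ≠ 0 → sg v f i = α i} = {f | 1 * f (v i) < 0} := by
        ext f; simp [h2, sg, sign_eq_neg_one_iff]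
      rw [this]; exact isOpen_half _ _

theorem convex_star {n : ℕ} (v : Fin n → V) (α : Fin n → SignType) :
    Convex ℝ {f : V →L[ℝ] ℝ | lev α (sg v f)} := by
  have : {f : V →L[ℝ] ℝ | lev α (sg v f)} = ⋂ i, ⋂ (_ : α i ≠ 0), {f | SignType.sign (f (v i)) = α i} := by
    ext f; simp [lev, sg]
  rw [this]
  exact convex_iInter fun i => convex_iInter fun _ => convex_sign _ _

variable [FiniteDimensional ℝ V]

open Classical in
theorem eul_open' {n : ℕ} (v : Fin n → V) {O : Set (V →L[ℝ] ℝ)} (h : IsOpen O) (hc : Convex ℝ O) :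
    eul v ⊥ O = if O.Nonempty then 1 else 0 := by
  rw [eul_open v ⊥ O (ROpen.of_open h hc)]; simp

theorem sg_half {n : ℕ} (v : Fin n → V) (i : Fin n) (s : ℝ) (f g : V →L[ℝ] ℝ)
    (h : sg v f = sg v g) (hf : f ∈ {f : V →L[ℝ] ℝ | 0 ≤ s * f (v i)}) :
    g ∈ {f : V →L[ℝ] ℝ | 0 ≤ s * f (v i)} := by
  have h' : SignType.sign (f (v i)) = SignType.sign (g (v i)) := congrFun h i
  change 0 ≤ s * f (v i) at hf
  change 0 ≤ s * g (v i)
  rw [← sign_nonneg_iff, sign_mul] at *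
  rwa [← h']

theorem compl_half (u : V) (s : ℝ) :
    {f : V →L[ℝ] ℝ | 0 ≤ s * f u}ᶜ = {f : V →L[ℝ] ℝ | s * f u < 0} := by
  ext f; simp

theorem eul_zero {n : ℕ} (v : Fin n → V) (d : V →L[ℝ] ℝ) (i0 : Fin n) (s0 : ℝ)
    (h0 : s0 * d (v i0) < 0) (I : Finset (Fin n × ℝ)) :
    (∀ c ∈ I, c.2 * d (v c.1) ≤ 0) → ∀ O : Set (V →L[ℝ] ℝ), IsOpen O → Convex ℝ O →
    (∀ f ∈ O, ∀ t : ℝ, 0 ≤ t → f + t • d ∈ O) →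
    eul v ⊥ ((O ∩ {f | 0 ≤ s0 * f (v i0)}) ∩ {f | ∀ c ∈ I, 0 ≤ c.2 * f (v c.1)}) = 0 := by
  classical
  induction I using Finset.induction_on with
  | empty =>
    intro _ O ho hc hd
    have h1 := eul_split v O _ (sg_half v i0 s0)
    rw [compl_half, eul_open' v ho hc, eul_open' v (ho.inter (isOpen_half _ _))
      (hc.inter (convex_half _ _))] at h1
    have h2 : (O ∩ {f | s0 * f (v i0) < 0}).Nonempty ↔ O.Nonempty := by
      refine ⟨fun h => h.mono Set.inter_subset_left, fun ⟨f, hf⟩ => ?_⟩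
      obtain ⟨t, ht⟩ := exists_nat_gt ((s0 * f (v i0)) / (-(s0 * d (v i0))))
      refine ⟨f + (t:ℝ) • d, hd f hf t (Nat.cast_nonneg t), ?_⟩
      rw [div_lt_iff₀ (by linarith)] at ht
      change s0 * (f + (t:ℝ) • d) (v i0) < 0
      simp only [add_apply, smul_apply, smul_eq_mul]
      nlinarith
    rw [if_congr h2 rfl rfl] at h1
    simp only [Finset.notMem_empty, false_imp_iff, implies_true]
    have : {f : V →L[ℝ] ℝ | True} = Set.univ := by ext; simp
    rw [this, Set.inter_univ]
    linarith
  | insert c I hcI ih =>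
    intro hI O ho hc hd
    have ih' := ih (fun c hc => hI c (Finset.mem_insert_of_mem hc))
    have h1 := ih' O ho hc hd
    have h2 := ih' (O ∩ {f | c.2 * f (v c.1) < 0}) (ho.inter (isOpen_half _ _))
      (hc.inter (convex_half _ _)) (by
        rintro f ⟨hf, hf'⟩ t ht
        refine ⟨hd f hf t ht, ?_⟩
        have := hI c (Finset.mem_insert_self _ _)
        change c.2 * f (v c.1) < 0 at hf'
        change c.2 * (f + t • d) (v c.1) < 0
        simp only [add_apply, smul_apply, smul_eq_mul]
        nlinarith)
    rw [eul_split v _ _ (sg_half v c.1 c.2), compl_half] at h1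
    have e1 : ((O ∩ {f | 0 ≤ s0 * f (v i0)}) ∩ {f | ∀ c ∈ I, 0 ≤ c.2 * f (v c.1)}) ∩ {f | 0 ≤ c.2 * f (v c.1)}
      = ((O ∩ {f | 0 ≤ s0 * f (v i0)}) ∩ {f | ∀ p ∈ insert c I, 0 ≤ p.2 * f (v p.1)}) := by
      ext f
      simp only [Set.mem_inter_iff, Set.mem_ofPred_eq, Finset.forall_mem_insert]
      tauto
    have e2 : ((O ∩ {f | 0 ≤ s0 * f (v i0)}) ∩ {f | ∀ c ∈ I, 0 ≤ c.2 * f (v c.1)}) ∩ {f | c.2 * f (v c.1) < 0}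
      = (((O ∩ {f | c.2 * f (v c.1) < 0}) ∩ {f | 0 ≤ s0 * f (v i0)}) ∩ {f | ∀ c ∈ I, 0 ≤ c.2 * f (v c.1)}) := by
      ext f
      simp only [Set.mem_inter_iff]
      tauto
    rw [e1, e2, h2, add_zero] at h1
    exact h1

theorem eul_interval {n : ℕ} (v : Fin n → V) (a c : V →L[ℝ] ℝ) (hac : lev (sg v a) (sg v c))
    (hne : sg v a ≠ sg v c) :
    eul v ⊥ {f | lev (sg v a) (sg v f) ∧ lev (sg v f) (sg v c)} = 0 := by
  classical
  have hK : ∃ K : ℝ, ∀ i, a (v i) ≠ 0 → |c (v i)| ≤ K * |a (v i)| := by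
    refine ⟨∑ i, |c (v i)| / |a (v i)|, fun i hi => ?_⟩
    rw [← div_le_iff₀ (abs_pos.2 hi)]
    exact Finset.single_le_sum (f := fun i => |c (v i)| / |a (v i)|) (fun i _ => by positivity)
      (Finset.mem_univ i)
  obtain ⟨K, hK⟩ := hK
  have hi0 : ∃ i, a (v i) = 0 ∧ c (v i) ≠ 0 := by
    by_contra hcon
    push Not at hcon
    apply hne
    ext1 i
    by_cases h : a (v i) = 0
    · simp [sg, h, hcon i h]
    · exact (hac i (by simpa [sg] using h)).symm
  obtain ⟨i0, hi0, hc0⟩ := hi0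
  let I : Finset (Fin n × ℝ) :=
    ((Finset.univ.filter (fun i => a (v i) = 0)).image (fun i => (i, c (v i)))) ∪
    (((Finset.univ.filter (fun i => a (v i) = 0 ∧ c (v i) = 0)).image (fun i => (i, (1:ℝ)))) ∪
    ((Finset.univ.filter (fun i => a (v i) = 0 ∧ c (v i) = 0)).image (fun i => (i, (-1:ℝ)))))
  have hI : ∀ P : Fin n × ℝ → Prop, (∀ p ∈ I, P p) ↔ ∀ i, a (v i) = 0 →
      P (i, c (v i)) ∧ (c (v i) = 0 → P (i, 1) ∧ P (i, -1)) := by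
    intro P
    simp only [I, Finset.forall_mem_union, Finset.forall_mem_image, Finset.mem_filter,
      Finset.mem_univ, true_and]
    constructor
    · rintro ⟨h1, h2, h3⟩ i hi
      exact ⟨h1 hi, fun h => ⟨h2 ⟨hi, h⟩, h3 ⟨hi, h⟩⟩⟩
    · intro h
      exact ⟨fun i hi => (h i hi).1, fun i hi => ((h i hi.1).2 hi.2).1,
        fun i hi => ((h i hi.1).2 hi.2).2⟩
  have hdv : ∀ i, (K • a - c) (v i) = K * a (v i) - c (v i) := fun i => by simp
  have main := eul_zero v (K • a - c) i0 (c (v i0))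
    (by rw [hdv, hi0]; nlinarith [mul_self_pos.2 hc0]) I
    (by
      rw [hI (fun p => p.2 * (K • a - c) (v p.1) ≤ 0)]
      intro i hi
      simp only [hdv, hi]
      refine ⟨by nlinarith [mul_self_nonneg (c (v i))], fun h => ?_⟩
      simp [h])
    {f | lev (sg v a) (sg v f)} (isOpen_star _ _) (convex_star _ _)
    (by
      intro f hf t ht i hi
      have h1 := hf i hi
      have hai : a (v i) ≠ 0 := by simpa [sg] using hi
      have h2 := hK i hai
      have e : (f + t • (K • a - c)) (v i) = f (v i) + t * (K * a (v i) - c (v i)) := by simp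
      simp only [sg, e] at h1 ⊢
      rcases lt_or_gt_of_ne hai with h | h
      · rw [sign_neg h] at h1 ⊢
        rw [sign_eq_neg_one_iff] at h1 ⊢
        rw [abs_of_neg h] at h2
        have : K * a (v i) - c (v i) ≤ 0 := by nlinarith [neg_abs_le (c (v i))]
        nlinarith [mul_nonpos_of_nonneg_of_nonpos ht this]
      · rw [sign_pos h] at h1 ⊢
        rw [sign_eq_one_iff] at h1 ⊢
        rw [abs_of_pos h] at h2
        have : 0 ≤ K * a (v i) - c (v i) := by nlinarith [le_abs_self (c (v i))]
        nlinarith [mul_nonneg ht this])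
  rw [← main]
  congr 1
  ext f
  simp only [Set.mem_inter_iff, Set.mem_ofPred_eq]
  rw [hI (fun p => 0 ≤ p.2 * f (v p.1)), and_assoc]
  refine and_congr_right fun haf => ?_
  constructor
  · intro hfc
    have hnn : ∀ i, 0 ≤ c (v i) * f (v i) := by
      intro i
      by_cases h : f (v i) = 0
      · simp [h]
      · have := hfc i (by simpa [sg] using h)
        simp only [sg] at this
        rw [← sign_nonneg_iff, sign_mul, this]
        generalize SignType.sign (f (v i)) = s
        revert s; decide
    refine ⟨hnn i0, fun i hi => ⟨hnn i, fun hci => ?_⟩⟩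
    have : f (v i) = 0 := by
      by_contra h
      have := hfc i (by simpa [sg] using h)
      simp only [sg, hci, sign_zero] at this
      exact h (sign_eq_zero_iff.1 this.symm)
    simp [this]
  · rintro ⟨-, h⟩ i hi
    by_cases ha : a (v i) = 0
    · obtain ⟨h1, h2⟩ := h i ha
      have hfi : f (v i) ≠ 0 := by simpa [sg] using hi
      have hci : c (v i) ≠ 0 := by
        intro h0
        have := h2 h0
        apply hfi
        simp only at this
        linarith [this.1, this.2]
      have hpos : 0 < c (v i) * f (v i) := lt_of_le_of_ne h1 (mul_ne_zero hci hfi).symm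
      simp only [sg]
      rcases mul_pos_iff.1 hpos with ⟨h3, h4⟩ | ⟨h3, h4⟩
      · rw [sign_pos h3, sign_pos h4]
      · rw [sign_neg h3, sign_neg h4]
    · rw [hac i (by simpa [sg] using ha), haf i (by simpa [sg] using ha)]

open Classical in
theorem main_comb {n : ℕ} (v : Fin n → V) (a : V →L[ℝ] ℝ) (x : V) :
    (∑ β : Fin n → SignType, if (∃ f, sg v f = β) ∧ lev (sg v a) β then
      wt v β * (if ∀ f, lev β (sg v f) → 0 ≤ f x then 1 else 0) else 0)
    = if ∀ f, sg v f = sg v a → 0 ≤ f x then 1 else 0 := by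
  have s1 : (∑ β : Fin n → SignType, if (∃ f, sg v f = β) ∧ lev (sg v a) β then wt v β else 0) = 1 := by
    have := eul_open' v (isOpen_star v (sg v a)) (convex_star v (sg v a))
    rw [if_pos ⟨a, lev.refl _⟩, eul_bot] at this
    rw [← this]
    refine Finset.sum_congr rfl fun β _ => if_congr ?_ rfl rfl
    constructor
    · rintro ⟨⟨f, rfl⟩, h⟩; exact ⟨f, h, rfl⟩
    · rintro ⟨f, h, rfl⟩; exact ⟨⟨f, rfl⟩, h⟩
  have s2 : ∀ β : Fin n → SignType, (if ∀ f, lev β (sg v f) → 0 ≤ f x then (1:ℤ) else 0)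
      = 1 - ∑ γ, if (∃ f : V →L[ℝ] ℝ, f x < 0 ∧ sg v f = γ) ∧ lev β γ then wt v γ else 0 := by
    intro β
    have := eul_open' v ((isOpen_star v β).inter (isOpen_half x 1)) ((convex_star v β).inter (convex_half x 1))
    rw [eul_bot] at this
    have e : (∑ γ, if (∃ f : V →L[ℝ] ℝ, f x < 0 ∧ sg v f = γ) ∧ lev β γ then wt v γ else 0)
        = if ({f : V →L[ℝ] ℝ | lev β (sg v f)} ∩ {f | 1 * f x < 0}).Nonempty then 1 else 0 := by
      rw [← this]
      refine Finset.sum_congr rfl fun γ _ => if_congr ?_ rfl rfl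
      constructor
      · rintro ⟨⟨f, h, rfl⟩, h'⟩; exact ⟨f, ⟨h', by simpa using h⟩, rfl⟩
      · rintro ⟨f, ⟨h, h'⟩, rfl⟩; exact ⟨⟨f, by simpa using h', rfl⟩, h⟩
    rw [e]
    by_cases hx : ∀ f, lev β (sg v f) → 0 ≤ f x
    · rw [if_pos hx, if_neg]; · simp
      rintro ⟨f, h1, h2⟩
      have h2 : 1 * f x < 0 := h2
      linarith [hx f h1]
    · rw [if_neg hx, if_pos]; · simp
      push Not at hx
      obtain ⟨f, h1, h2⟩ := hx
      exact ⟨f, h1, by simpa using h2⟩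
  have s3 : ∀ γ : Fin n → SignType, (∃ f, sg v f = γ) →
      (∑ β : Fin n → SignType, if ((∃ f, sg v f = β) ∧ lev (sg v a) β) ∧ lev β γ then wt v β else 0)
      = if γ = sg v a then wt v γ else 0 := by
    rintro _ ⟨c, rfl⟩
    by_cases hac : lev (sg v a) (sg v c)
    · by_cases hne : sg v a = sg v c
      · rw [if_pos hne.symm, Finset.sum_eq_single (sg v c)]
        · rw [if_pos ⟨⟨⟨c, rfl⟩, hac⟩, lev.refl _⟩]
        · intro β _ hβ
          rw [if_neg]
          rintro ⟨⟨_, h1⟩, h2⟩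
          rw [hne] at h1
          exact hβ (h2.antisymm h1)
        · simp
      · refine Eq.trans ?_ ((eul_interval v a c hac hne).trans (if_neg (Ne.symm hne)).symm)
        rw [eul_bot]
        refine Finset.sum_congr rfl fun β _ => if_congr ?_ rfl rfl
        constructor
        · rintro ⟨⟨⟨f, rfl⟩, h⟩, h'⟩; exact ⟨f, ⟨h, h'⟩, rfl⟩
        · rintro ⟨f, ⟨h, h'⟩, rfl⟩; exact ⟨⟨⟨f, rfl⟩, h⟩, h'⟩
    · rw [if_neg, Finset.sum_eq_zero]
      · intro β _
        rw [if_neg]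
        rintro ⟨⟨_, h1⟩, h2⟩
        exact hac (h1.trans h2)
      · intro h; rw [h] at hac; exact hac (lev.refl _)
  have s4 : (∑ β : Fin n → SignType, if (∃ f, sg v f = β) ∧ lev (sg v a) β then
      wt v β * (∑ γ, if (∃ f : V →L[ℝ] ℝ, f x < 0 ∧ sg v f = γ) ∧ lev β γ then wt v γ else 0) else 0)
      = ∑ γ, if (∃ f : V →L[ℝ] ℝ, f x < 0 ∧ sg v f = γ) then wt v γ *
        (∑ β : Fin n → SignType, if ((∃ f, sg v f = β) ∧ lev (sg v a) β) ∧ lev β γ then wt v β else 0) else 0 := by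
    have l : ∀ β : Fin n → SignType, (if (∃ f, sg v f = β) ∧ lev (sg v a) β then
      wt v β * (∑ γ, if (∃ f : V →L[ℝ] ℝ, f x < 0 ∧ sg v f = γ) ∧ lev β γ then wt v γ else 0) else 0)
      = ∑ γ, if ((∃ f, sg v f = β) ∧ lev (sg v a) β) ∧ (∃ f : V →L[ℝ] ℝ, f x < 0 ∧ sg v f = γ) ∧ lev β γ
        then wt v β * wt v γ else 0 := by
      intro β
      by_cases h : (∃ f, sg v f = β) ∧ lev (sg v a) β
      · rw [if_pos h, Finset.mul_sum]
        simp only [h, true_and, mul_ite, mul_zero, and_self]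
      · simp only [if_neg h, h, false_and, if_false, Finset.sum_const_zero]
    rw [Finset.sum_congr rfl fun β _ => l β, Finset.sum_comm]
    refine Finset.sum_congr rfl fun γ _ => ?_
    by_cases h : ∃ f : V →L[ℝ] ℝ, f x < 0 ∧ sg v f = γ
    · rw [if_pos h, Finset.mul_sum]
      refine Finset.sum_congr rfl fun β _ => ?_
      simp only [h, true_and, mul_ite, mul_zero, mul_comm]
    · rw [if_neg h]
      refine Finset.sum_eq_zero fun β _ => ?_
      simp only [h, false_and, and_false, if_false]
  have s5 : (∑ γ, if (∃ f : V →L[ℝ] ℝ, f x < 0 ∧ sg v f = γ) then wt v γ *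
        (∑ β : Fin n → SignType, if ((∃ f, sg v f = β) ∧ lev (sg v a) β) ∧ lev β γ then wt v β else 0) else 0)
      = if (∃ f : V →L[ℝ] ℝ, f x < 0 ∧ sg v f = sg v a) then 1 else 0 := by
    rw [Finset.sum_eq_single (sg v a)]
    · rw [s3 _ ⟨a, rfl⟩, if_pos rfl, wt_sq]
    · intro γ _ hγ
      by_cases h : ∃ f : V →L[ℝ] ℝ, f x < 0 ∧ sg v f = γ
      · rw [if_pos h, s3 γ (h.imp fun f hf => hf.2), if_neg hγ, mul_zero]
      · rw [if_neg h]
    · simp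
  have s6 : (∑ β : Fin n → SignType, if (∃ f, sg v f = β) ∧ lev (sg v a) β then
      wt v β * (if ∀ f, lev β (sg v f) → 0 ≤ f x then 1 else 0) else 0)
      = 1 - if (∃ f : V →L[ℝ] ℝ, f x < 0 ∧ sg v f = sg v a) then 1 else 0 := by
    rw [← s5, ← s4]
    refine Eq.trans ?_ (congrArg (fun z => z - _) s1)
    rw [← Finset.sum_sub_distrib]
    refine Finset.sum_congr rfl fun β _ => ?_
    rw [s2 β]
    split_ifs
    · ring
    · ring
  rw [s6]
  by_cases hx : ∀ f, sg v f = sg v a → 0 ≤ f x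
  · rw [if_pos hx, if_neg]; · simp
    rintro ⟨f, h1, h2⟩
    linarith [hx f h2]
  · rw [if_neg hx, if_pos]; · simp
    push Not at hx
    obtain ⟨f, h1, h2⟩ := hx
    exact ⟨f, h2, h1⟩
end

section
variable {V : Type*} [NormedAddCommGroup V] [NormedSpace ℝ V]

theorem sg_add_small {n : ℕ} (v : Fin n → V) (f g : V →L[ℝ] ℝ) :
    ∀ᶠ t in nhds (0:ℝ), lev (sg v f) (sg v (f + t • g)) := by
  have : ∀ i, ∀ᶠ t in nhds (0:ℝ), sg v f i ≠ 0 → sg v (f + t • g) i = sg v f i := by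
    intro i
    by_cases h : f (v i) = 0
    · exact Filter.Eventually.of_forall fun t ht => absurd (by simp [sg, h]) ht
    · filter_upwards [sign_eventually (v i) f g h] with t ht _
      exact ht
  exact Filter.eventually_all.2 this

theorem face_closure {n : ℕ} (v : Fin n → V) (a b : V →L[ℝ] ℝ) :
    {g | sg v a = sg v g} ⊆ closure {g | sg v b = sg v g} ↔ lev (sg v a) (sg v b) := by
  constructor
  · intro h
    have ha : a ∈ closure {g | sg v b = sg v g} := h rfl
    obtain ⟨g, hg1, hg2⟩ := mem_closure_iff.1 ha _ (isOpen_star v (sg v a)) (lev.refl _)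
    have hg2 : sg v b = sg v g := hg2
    rw [hg2]; exact hg1
  · intro h a' ha'
    have ha' : sg v a = sg v a' := ha'
    rw [ha'] at h
    have ht : Filter.Tendsto (fun t : ℝ => a' + t • b) (nhdsWithin 0 (Set.Ioi 0)) (nhds a') := by
      have hc : Continuous (fun t : ℝ => a' + t • b) := by fun_prop
      have := hc.tendsto 0
      simp only [zero_smul, add_zero] at this
      exact this.mono_left nhdsWithin_le_nhds
    refine mem_closure_of_tendsto ht ?_
    filter_upwards [eventually_nhdsWithin_of_eventually_nhds (sg_add_small v a' b),
      self_mem_nhdsWithin] with t h1 h2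
    have h2 : 0 < t := h2
    change sg v b = sg v (a' + t • b)
    ext1 i
    by_cases hi : sg v a' i = 0
    · have : a' (v i) = 0 := sign_eq_zero_iff.1 hi
      simp [sg, this, sign_mul, sign_pos h2]
    · rw [h1 i hi, h i hi]

theorem face_span {n : ℕ} (v : Fin n → V) (f g : V →L[ℝ] ℝ) :
    g ∈ Submodule.span ℝ {g | sg v f = sg v g} ↔
      ∀ z ∈ Submodule.span ℝ (v '' {i | sg v f i = 0}), g z = 0 := by
  constructor
  · intro hg
    induction hg using Submodule.span_induction with
    | mem g hg =>
      intro z hz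
      induction hz using Submodule.span_induction with
      | mem z hz =>
        obtain ⟨i, hi, rfl⟩ := hz
        have hg : sg v f = sg v g := hg
        have hi : sg v f i = 0 := hi
        rw [hg] at hi
        exact sign_eq_zero_iff.1 hi
      | zero => simp
      | add x y _ _ hx hy => simp [hx, hy]
      | smul c x _ hx => simp [hx]
    | zero => simp
    | add x y _ _ hx hy => intro z hz; simp [hx z hz, hy z hz]
    | smul c x _ hx => intro z hz; simp [hx z hz]
  · intro hz
    have hf : f ∈ Submodule.span ℝ {g | sg v f = sg v g} := Submodule.subset_span rfl
    obtain ⟨t, h1, h2⟩ := ((eventually_nhdsWithin_of_eventually_nhds (s := Set.Ioi 0)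
      (sg_add_small v f g)).and self_mem_nhdsWithin).exists
    have h2 : 0 < t := h2
    have h3 : f + t • g ∈ Submodule.span ℝ {g | sg v f = sg v g} := by
      refine Submodule.subset_span ?_
      change sg v f = sg v (f + t • g)
      ext1 i
      by_cases hi : sg v f i = 0
      · have e : f (v i) = 0 := sign_eq_zero_iff.1 hi
        have := hz (v i) (Submodule.subset_span ⟨i, hi, rfl⟩)
        simp [sg, e, this]
      · exact (h1 i hi).symm
    have h4 := (Submodule.add_mem_iff_right _ hf).1 h3
    exact (Submodule.smul_mem_iff _ h2.ne').1 h4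

variable [FiniteDimensional ℝ V]

theorem face_wt {n : ℕ} (v : Fin n → V) (f : V →L[ℝ] ℝ) :
    (-1 : ℤ) ^ (Module.finrank ℝ V - Module.finrank ℝ (Submodule.span ℝ {g | sg v f = sg v g}))
      = wt v (sg v f) := by
  unfold wt
  congr 1
  have e : (Submodule.span ℝ {g | sg v f = sg v g}) =
      (Submodule.span ℝ (v '' {i | sg v f i = 0})).dualAnnihilator.map
        (LinearMap.toContinuousLinearMap : (V →ₗ[ℝ] ℝ) ≃ₗ[ℝ] (V →L[ℝ] ℝ)).toLinearMap := by
    ext g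
    rw [face_span, Submodule.mem_map]
    constructor
    · intro h
      refine ⟨(g : V →ₗ[ℝ] ℝ), (Submodule.mem_dualAnnihilator _).2 h, ?_⟩
      ext x; simp
    · rintro ⟨g, hg, rfl⟩ z hz
      exact (Submodule.mem_dualAnnihilator _).1 hg z hz
  have e2 := LinearEquiv.finrank_map_eq (LinearMap.toContinuousLinearMap : (V →ₗ[ℝ] ℝ) ≃ₗ[ℝ] (V →L[ℝ] ℝ))
    (Submodule.span ℝ (v '' {i | sg v f i = 0})).dualAnnihilator
  rw [e]
  have := Subspace.finrank_add_finrank_dualAnnihilator_eq (Submodule.span ℝ (v '' {i | sg v f i = 0}))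
  erw [e2]
  exact Nat.sub_eq_of_eq_add this.symm

theorem smallCone_iff (H : Finset (Submodule ℝ V)) {n : ℕ} (v : Fin n → V) (hv : ∀ i, v i ≠ 0)
    (hD : ∀ f g, DualSameFace H f g ↔ sg v f = sg v g) (b : V →L[ℝ] ℝ) (x : V) :
    x ∈ smallCone H {g | sg v b = sg v g} ↔ ∀ f, lev (sg v b) (sg v f) → 0 ≤ f x := by
  simp only [smallCone, Set.mem_iInter]
  constructor
  · intro h f hf
    by_contra hx
    push Not at hx
    obtain ⟨g, hg⟩ := Module.exists_dual_forall_apply_ne_zero (K := ℝ) v hv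
    let g' : V →L[ℝ] ℝ := LinearMap.toContinuousLinearMap g
    have hg' : ∀ i, g' (v i) ≠ 0 := hg
    obtain ⟨t, ⟨h1, h3⟩, h2⟩ := (((eventually_nhdsWithin_of_eventually_nhds (s := Set.Ioi 0)
      (sg_add_small v f g')).and (eventually_nhdsWithin_of_eventually_nhds
        (sign_eventually x f g' hx.ne))).and self_mem_nhdsWithin).exists
    have h2 : 0 < t := h2
    have hgen : ∀ i, sg v (f + t • g') i ≠ 0 := by
      intro i
      by_cases hi : sg v f i = 0
      · have e : f (v i) = 0 := sign_eq_zero_iff.1 hi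
        simp [sg, e, h2.ne', hg' i]
      · rw [h1 i hi]; exact hi
    have hop : {g | sg v (f + t • g') = sg v g} = {g | lev (sg v (f + t • g')) (sg v g)} := by
      ext g
      constructor
      · intro h; have h : sg v (f + t • g') = sg v g := h
        change lev _ _; rw [h]; exact lev.refl _
      · intro h; change sg v (f + t • g') = sg v g
        ext1 i; exact (h i (hgen i)).symm
    have h4 := h {g | sg v (f + t • g') = sg v g} ⟨⟨⟨f + t • g', by ext g; exact (hD _ _).symm⟩, by
      rw [hop]; exact isOpen_star _ _⟩, (face_closure v b _).2 (hf.trans h1)⟩ (f + t • g') rfl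
    rw [sign_neg hx, sign_eq_neg_one_iff] at h3
    linarith
  · rintro h B ⟨⟨⟨c, rfl⟩, -⟩, hB⟩ f hf
    have e : {g | DualSameFace H c g} = {g | sg v c = sg v g} := by ext g; exact hD _ _
    rw [e] at hB hf
    have hf : sg v c = sg v f := hf
    have := (face_closure v b c).1 hB
    rw [hf] at this
    exact h f this

theorem exists_family (H : Finset (Submodule ℝ V)) : ∃ (n : ℕ) (v : Fin n → V), (∀ i, v i ≠ 0) ∧
    ∀ f g, DualSameFace H f g ↔ sg v f = sg v g := by
  classical
  let L : Finset (Submodule ℝ V) := (H.powerset.image (fun J => J.inf id)).filter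
    (fun l => Module.finrank ℝ l = 1)
  have hL : ∀ l, l ∈ L ↔ IsFlat H l ∧ Module.finrank ℝ l = 1 := by
    intro l
    simp only [L, Finset.mem_filter, Finset.mem_image, Finset.mem_powerset, IsFlat]
    refine and_congr_left fun _ => exists_congr fun J => and_congr_right fun _ => eq_comm
  have hgen : ∀ l : L, ∃ u : V, u ≠ 0 ∧ u ∈ l.1 ∧ ∀ x ∈ l.1, ∃ c : ℝ, c • u = x := by
    intro l
    obtain ⟨u, hu, h⟩ := finrank_eq_one_iff'.1 ((hL l.1).1 l.2).2
    refine ⟨u.1, by simpa using hu, u.2, fun x hx => ?_⟩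
    obtain ⟨c, hc⟩ := h ⟨x, hx⟩
    exact ⟨c, congrArg Subtype.val hc⟩
  choose u hu0 hul hu using hgen
  refine ⟨L.card, fun i => u (L.equivFin.symm i), fun i => hu0 _, fun f g => ?_⟩
  have key : ∀ a b : ℝ, (0 < a * b ∨ (a = 0 ∧ b = 0)) ↔ SignType.sign a = SignType.sign b := by
    intro a b
    rcases lt_trichotomy a 0 with ha | ha | ha <;> rcases lt_trichotomy b 0 with hb | hb | hb
    · simp [sign_neg ha, sign_neg hb, mul_pos_of_neg_of_neg ha hb]
    · simp [sign_neg ha, hb, ha.ne]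
    · simp [sign_neg ha, sign_pos hb, ha.ne, (mul_neg_of_neg_of_pos ha hb).le]
    · simp [ha, sign_neg hb, hb.ne]
    · simp [ha, hb]
    · simp [ha, sign_pos hb, hb.ne']
    · simp [sign_pos ha, sign_neg hb, ha.ne', (mul_neg_of_pos_of_neg ha hb).le]
    · simp [sign_pos ha, hb, ha.ne']
    · simp [sign_pos ha, sign_pos hb, mul_pos ha hb]
  constructor
  · intro h
    ext1 i
    have hl := (hL _).1 (L.equivFin.symm i).2
    exact (key _ _).1 (h _ hl.1 hl.2 _ (hul _))
  · intro h l h1 h2 x hx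
    rw [key]
    have hl := (hL l).2 ⟨h1, h2⟩
    obtain ⟨c, rfl⟩ := hu ⟨l, hl⟩ x hx
    have := congrFun h (L.equivFin ⟨l, hl⟩)
    simp only [sg, Equiv.symm_apply_apply] at this
    simp [sign_mul, this]
end

/-- inclusion–exclusion for big dual cones: for every dual face `A∨`
and every `x ∈ V`,
`1_{U(A∨)}(x) = Σ_{B∨ ≥ A∨} (−1)^{n − dim B∨} · 1_{V(B∨)}(x)`. -/
theorem statement6 {V : Type*} [NormedAddCommGroup V] [NormedSpace ℝ V]
    [FiniteDimensional ℝ V] (H : Finset (Submodule ℝ V))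
    (hHyp : ∀ W ∈ H, ∃ f : V →ₗ[ℝ] ℝ, f ≠ 0 ∧ LinearMap.ker f = W)
    (hEss : (⋂ W ∈ H, (W : Set V)) = {0})
    (A : Set (V →L[ℝ] ℝ)) (hA : IsDualFace H A)
    (F : Finset (Set (V →L[ℝ] ℝ)))
    (hF : ∀ B : Set (V →L[ℝ] ℝ), B ∈ F ↔ IsDualFace H B ∧ A ⊆ closure B)
    (x : V) :
    Set.indicator (bigCone A) (fun _ => (1 : ℤ)) x =
      ∑ B ∈ F,
        (-1 : ℤ) ^ (Module.finrank ℝ V - Module.finrank ℝ (Submodule.span ℝ B)) *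
          Set.indicator (smallCone H B) (fun _ => (1 : ℤ)) x := by
  classical
  obtain ⟨n, v, hv, hD⟩ := exists_family H
  have hface : ∀ f, {g | DualSameFace H f g} = {g | sg v f = sg v g} := by
    intro f; ext g; exact hD _ _
  obtain ⟨a, rfl⟩ := hA
  rw [hface a] at hF ⊢
  have main := main_comb v a x
  have hU : Set.indicator (bigCone {g | sg v a = sg v g}) (fun _ => (1 : ℤ)) x
      = if ∀ f, sg v f = sg v a → 0 ≤ f x then 1 else 0 := by
    rw [Set.indicator_apply]
    refine if_congr ?_ rfl rfl
    exact forall_congr' fun f => ⟨fun h h' => h h'.symm, fun h h' => h (Eq.symm h')⟩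
  rw [hU, ← main, ← Finset.sum_filter]
  refine Finset.sum_bij (fun β _ => {g | β = sg v g}) ?_ ?_ ?_ ?_
  · intro β hβ
    obtain ⟨⟨f, rfl⟩, h⟩ := (Finset.mem_filter.1 hβ).2
    exact (hF _).2 ⟨⟨f, (hface f).symm⟩, (face_closure v a f).2 h⟩
  · intro β hβ γ hγ h
    obtain ⟨⟨f, rfl⟩, _⟩ := (Finset.mem_filter.1 hβ).2
    have : f ∈ {g | γ = sg v g} := by rw [← h]; rfl
    exact Eq.symm this
  · intro B hB
    obtain ⟨⟨f, rfl⟩, h⟩ := (hF B).1 hB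
    rw [hface f] at h ⊢
    exact ⟨sg v f, Finset.mem_filter.2 ⟨Finset.mem_univ _, ⟨f, rfl⟩, (face_closure v a f).1 h⟩, rfl⟩
  · intro β hβ
    obtain ⟨⟨f, rfl⟩, _⟩ := (Finset.mem_filter.1 hβ).2
    rw [face_wt, Set.indicator_apply]
    congr 1
    exact if_congr (smallCone_iff H v hv hD f x).symm rfl rfl
end

section
/- (Inclusion–exclusion for small dual cones.) Let n = dim V. For every face A∨ of the dual arrangement H∨ and every x ∈ V: 1_{V(A∨)}(x) = Σ_{B∨} (−1)^{n − dim B∨} · 1_{U(B∨)}(x), the sum (with values in ℤ) ranging over the finitely many faces B∨ of H∨ with A∨ ≤ B∨, where 1_S denotes the indicator function of a set S and dim B∨ is the dimension of the linear span of B∨. -/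
noncomputable def dimZ {E : Type*} [NormedAddCommGroup E] [NormedSpace ℝ E] {m : ℕ}
    (ℓ : Fin m → (E →L[ℝ] ℝ)) (P : Submodule ℝ E) (σ : Fin m → SignType) : ℕ :=
  Module.finrank ℝ (P ⊓ ⨅ i, ⨅ (_ : σ i = 0), LinearMap.ker (ℓ i : E →ₗ[ℝ] ℝ) : Submodule ℝ E)

open Classical in
theorem euler_aux {E : Type*} [NormedAddCommGroup E] [NormedSpace ℝ E] [FiniteDimensional ℝ E] :
    ∀ (m : ℕ) (ℓ : Fin m → (E →L[ℝ] ℝ)) (P : Submodule ℝ E) (O : Set E), IsOpen O → Convex ℝ O →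
    (∑ σ : Fin m → SignType,
      if (∃ f ∈ O, f ∈ P ∧ ∀ i, SignType.sign (ℓ i f) = σ i) then
        (-1 : ℤ) ^ (dimZ ℓ P σ)
      else 0) = if (∃ f ∈ O, f ∈ P) then (-1 : ℤ) ^ (Module.finrank ℝ P) else 0 := by
  intro m
  induction m with
  | zero =>
    intro ℓ P O hO hc
    have h : ∀ σ, dimZ ℓ P σ = Module.finrank ℝ P := fun σ =>
      congrArg (fun Q : Submodule ℝ E => Module.finrank ℝ Q) (by simp [iInf_of_empty])
    simp [h]
  | succ m ih =>
    intro ℓ P O hO hc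
    have hop : IsOpen (O ∩ {f | 0 < ℓ 0 f}) :=
      hO.inter (isOpen_lt continuous_const (ℓ 0).continuous)
    have hon : IsOpen (O ∩ {f | ℓ 0 f < 0}) :=
      hO.inter (isOpen_lt (ℓ 0).continuous continuous_const)
    have hcp : Convex ℝ (O ∩ {f | 0 < ℓ 0 f}) :=
      hc.inter (convex_halfSpace_gt (ℓ 0).isLinear 0)
    have hcn : Convex ℝ (O ∩ {f | ℓ 0 f < 0}) :=
      hc.inter (convex_halfSpace_lt (ℓ 0).isLinear 0)
    have e1 := ih (fun i => ℓ i.succ) P _ hop hcp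
    have e2 := ih (fun i => ℓ i.succ) P _ hon hcn
    have e3 := ih (fun i => ℓ i.succ) (P ⊓ LinearMap.ker (ℓ 0 : E →ₗ[ℝ] ℝ)) O hO hc
    rw [← (Fin.consEquiv (fun _ => SignType)).sum_comp, Fintype.sum_prod_type]
    have hu : (Finset.univ : Finset SignType) = {0, -1, 1} := rfl
    rw [hu, Finset.sum_insert (by decide), Finset.sum_insert (by decide), Finset.sum_singleton]
    have hZ : ∀ (s : SignType) (τ : Fin m → SignType) ,
        dimZ ℓ P ((Fin.consEquiv (fun _ => SignType)) (s, τ)) =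
        dimZ (fun i => ℓ i.succ) (if s = 0 then P ⊓ LinearMap.ker (ℓ 0 : E →ₗ[ℝ] ℝ) else P) τ := by
      intro s τ
      refine congrArg (fun Q : Submodule ℝ E => Module.finrank ℝ Q) ?_
      ext f
      split_ifs with h <;> 
      simp [Submodule.mem_iInf, Fin.forall_fin_succ, Fin.consEquiv, h, and_assoc]
    have hX : ∀ (s : SignType) (τ : Fin m → SignType) (f : E),
        (∀ i, SignType.sign (ℓ i f) = (Fin.consEquiv (fun _ => SignType)) (s, τ) i) ↔
        SignType.sign (ℓ 0 f) = s ∧ ∀ i : Fin m, SignType.sign (ℓ i.succ f) = τ i := by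
      intro s τ f
      simp [Fin.forall_fin_succ, Fin.consEquiv]
    simp only [hZ, hX, if_true]
    have E1 : (∑ τ : Fin m → SignType, if (∃ f ∈ O, f ∈ P ∧ SignType.sign (ℓ 0 f) = 1 ∧ ∀ i : Fin m, SignType.sign (ℓ i.succ f) = τ i) then (-1 : ℤ) ^ (dimZ (fun i => ℓ i.succ) (if (1 : SignType) = 0 then P ⊓ LinearMap.ker (ℓ 0 : E →ₗ[ℝ] ℝ) else P) τ) else 0) = if (∃ f ∈ O ∩ {f | 0 < ℓ 0 f}, f ∈ P) then (-1 : ℤ) ^ (Module.finrank ℝ P) else 0 := by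
      rw [← e1]
      refine Finset.sum_congr rfl fun τ _ => ?_
      rw [if_neg (show ¬ (1 : SignType) = 0 by decide)]
      refine if_congr ?_ rfl rfl
      simp only [sign_eq_one_iff, Set.mem_inter_iff, Set.mem_ofPred_eq]
      exact exists_congr fun f => by tauto
    have E2 : (∑ τ : Fin m → SignType, if (∃ f ∈ O, f ∈ P ∧ SignType.sign (ℓ 0 f) = -1 ∧ ∀ i : Fin m, SignType.sign (ℓ i.succ f) = τ i) then (-1 : ℤ) ^ (dimZ (fun i => ℓ i.succ) (if (-1 : SignType) = 0 then P ⊓ LinearMap.ker (ℓ 0 : E →ₗ[ℝ] ℝ) else P) τ) else 0) = if (∃ f ∈ O ∩ {f | ℓ 0 f < 0}, f ∈ P) then (-1 : ℤ) ^ (Module.finrank ℝ P) else 0 := by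
      rw [← e2]
      refine Finset.sum_congr rfl fun τ _ => ?_
      rw [if_neg (show ¬ (-1 : SignType) = 0 by decide)]
      refine if_congr ?_ rfl rfl
      simp only [sign_eq_neg_one_iff, Set.mem_inter_iff, Set.mem_ofPred_eq]
      exact exists_congr fun f => by tauto
    have E3 : (∑ τ : Fin m → SignType, if (∃ f ∈ O, f ∈ P ∧ SignType.sign (ℓ 0 f) = 0 ∧ ∀ i : Fin m, SignType.sign (ℓ i.succ f) = τ i) then (-1 : ℤ) ^ (dimZ (fun i => ℓ i.succ) (P ⊓ LinearMap.ker (ℓ 0 : E →ₗ[ℝ] ℝ)) τ) else 0) = if (∃ f ∈ O, f ∈ P ⊓ LinearMap.ker (ℓ 0 : E →ₗ[ℝ] ℝ)) then (-1 : ℤ) ^ (Module.finrank ℝ (P ⊓ LinearMap.ker (ℓ 0 : E →ₗ[ℝ] ℝ) : Submodule ℝ E)) else 0 := by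
      rw [← e3]
      refine Finset.sum_congr rfl fun τ _ => ?_
      refine if_congr ?_ rfl rfl
      simp only [sign_eq_zero_iff, Submodule.mem_inf, LinearMap.mem_ker, ContinuousLinearMap.coe_coe]
      exact exists_congr fun f => by tauto
    rw [E1, E2, E3]
    clear E1 E2 E3 e1 e2 e3 hZ hX hu
    by_cases hP : P ≤ LinearMap.ker (ℓ 0 : E →ₗ[ℝ] ℝ)
    · have h0 : ∀ f ∈ P, ℓ 0 f = 0 := fun f hf => hP hf
      rw [inf_eq_left.2 hP, if_neg (c := ∃ f ∈ O ∩ {f | 0 < ℓ 0 f}, f ∈ P),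
        if_neg (c := ∃ f ∈ O ∩ {f | ℓ 0 f < 0}, f ∈ P)]
      · simp
      · rintro ⟨f, ⟨_, h⟩, hf⟩
        exact h.ne (h0 f hf)
      · rintro ⟨f, ⟨_, h⟩, hf⟩
        exact h.ne' (h0 f hf)
    obtain ⟨p, hpP, hp⟩ : ∃ p ∈ P, 0 < ℓ 0 p := by
      obtain ⟨p, hpP, hp⟩ := SetLike.not_le_iff_exists.1 hP
      have hp' : ℓ 0 p ≠ 0 := hp
      rcases lt_or_gt_of_ne hp' with h | h
      · exact ⟨-p, P.neg_mem hpP, by simpa using h⟩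
      · exact ⟨p, hpP, h⟩
    have hfr : Module.finrank ℝ (P ⊓ LinearMap.ker (ℓ 0 : E →ₗ[ℝ] ℝ) : Submodule ℝ E) + 1 = Module.finrank ℝ P := by
      have hne : ((ℓ 0 : E →ₗ[ℝ] ℝ).domRestrict P : Module.Dual ℝ P) ≠ 0 := by
        intro h
        have := congrArg (fun g : Module.Dual ℝ P => g ⟨p, hpP⟩) h
        exact hp.ne' this
      have := Module.Dual.finrank_ker_add_one_of_ne_zero hne
      rw [← this]
      congr 1
      rw [LinearEquiv.finrank_eq (Submodule.equivSubtypeMap P _)]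
      refine congrArg (fun Q : Submodule ℝ E => Module.finrank ℝ Q) ?_
      ext f
      simp
      tauto
    by_cases h0 : ∃ f ∈ O, f ∈ P ⊓ LinearMap.ker (ℓ 0 : E →ₗ[ℝ] ℝ)
    · obtain ⟨f, hfO, hfP, hf0⟩ := id h0
      have hf0' : ℓ 0 f = 0 := hf0
      have hcont : Filter.Tendsto (fun t : ℝ => f + t • p) (nhds 0) (nhds f) := by
        have : Continuous (fun t : ℝ => f + t • p) := by fun_prop
        simpa using this.tendsto 0
      obtain ⟨ε, hε, hb⟩ := Metric.eventually_nhds_iff.1 (hcont.eventually (hO.mem_nhds hfO))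
      rw [if_pos h0, if_pos, if_pos, if_pos, ← hfr]
      · ring
      · exact ⟨f, hfO, hfP⟩
      · refine ⟨f + (ε/2) • p, ⟨hb ?_, ?_⟩, P.add_mem hfP (P.smul_mem _ hpP)⟩
        · simp [abs_of_pos hε]; linarith
        · simp only [Set.mem_ofPred_eq, map_add, map_smul, hf0', smul_eq_mul, zero_add]; positivity
      · refine ⟨f + (-(ε/2)) • p, ⟨hb ?_, ?_⟩, P.add_mem hfP (P.smul_mem _ hpP)⟩
        · simp [abs_of_pos hε]; linarith
        · simp only [Set.mem_ofPred_eq, map_add, map_smul, hf0', smul_eq_mul, zero_add]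
          have : 0 < ε/2 * ℓ 0 p := by positivity
          linarith
    · rw [if_neg h0]
      have hne : ∀ f ∈ O, f ∈ P → ℓ 0 f ≠ 0 := fun f h1 h2 h3 => h0 ⟨f, h1, h2, h3⟩
      by_cases h1 : ∃ f ∈ O ∩ {f | 0 < ℓ 0 f}, f ∈ P
      · obtain ⟨f, ⟨hfO, hf⟩, hfP⟩ := id h1
        have h2 : ¬ ∃ f ∈ O ∩ {f | ℓ 0 f < 0}, f ∈ P := by
          rintro ⟨g, ⟨hgO, hg⟩, hgP⟩
          simp only [Set.mem_ofPred_eq] at hf hg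
          have hd : 0 < ℓ 0 f - ℓ 0 g := by linarith
          have ha : 0 ≤ -ℓ 0 g / (ℓ 0 f - ℓ 0 g) := div_nonneg (by linarith) hd.le
          have hb : 0 ≤ ℓ 0 f / (ℓ 0 f - ℓ 0 g) := div_nonneg hf.le hd.le
          refine hne _ (hc hfO hgO ha hb (by field_simp; ring))
            (P.add_mem (P.smul_mem _ hfP) (P.smul_mem _ hgP)) ?_
          simp only [map_add, map_smul, smul_eq_mul]
          field_simp
          ring
        rw [if_pos h1, if_neg h2, if_pos ⟨f, hfO, hfP⟩]
        ring
      · rw [if_neg h1, zero_add, add_zero]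
        refine if_congr ?_ rfl rfl
        constructor
        · rintro ⟨f, ⟨h2, _⟩, h3⟩
          exact ⟨f, h2, h3⟩
        · rintro ⟨f, h2, h3⟩
          refine ⟨f, ⟨h2, ?_⟩, h3⟩
          rcases lt_or_gt_of_ne (hne f h2 h3) with h | h
          · exact h
          · exact absurd ⟨f, ⟨h2, h⟩, h3⟩ h1

theorem sign_aux (a b : ℝ) : (0 < a * b ∨ (a = 0 ∧ b = 0)) ↔ SignType.sign a = SignType.sign b := by
  rcases lt_trichotomy a 0 with ha | ha | ha <;> rcases lt_trichotomy b 0 with hb | hb | hb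
  · simp [sign_neg ha, sign_neg hb, mul_pos_of_neg_of_neg ha hb]
  · simp [hb, ha.ne]
  · simp [sign_neg ha, sign_pos hb, ha.ne, (mul_neg_of_neg_of_pos ha hb).le]
  · simp [ha, hb.ne, sign_neg hb]
  · simp [ha, hb]
  · simp [ha, hb.ne', sign_pos hb]
  · simp [sign_pos ha, sign_neg hb, ha.ne', (mul_neg_of_pos_of_neg ha hb).le]
  · simp [hb, ha.ne']
  · simp [sign_pos ha, sign_pos hb, mul_pos ha hb]

theorem exists_vecs {V : Type*} [NormedAddCommGroup V] [NormedSpace ℝ V]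
    (H : Finset (Submodule ℝ V)) :
    ∃ (m : ℕ) (v : Fin m → V), (∀ i, v i ≠ 0) ∧ ∀ f g : V →L[ℝ] ℝ,
      DualSameFace H f g ↔ ∀ i, SignType.sign (f (v i)) = SignType.sign (g (v i)) := by
  have hfin : {l : Submodule ℝ V | IsFlat H l ∧ Module.finrank ℝ l = 1}.Finite := by
    refine ((H.powerset.finite_toSet).image (fun J => J.inf id)).subset ?_
    rintro l ⟨⟨J, hJ, rfl⟩, _⟩
    exact ⟨J, by simpa using hJ, rfl⟩
  have hv : ∀ l : Submodule ℝ V, Module.finrank ℝ l = 1 →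
      ∃ v ∈ l, v ≠ 0 ∧ ∀ w ∈ l, ∃ c : ℝ, c • v = w := by
    intro l hl
    obtain ⟨v, hv0, hv⟩ := finrank_eq_one_iff'.1 hl
    refine ⟨v, v.2, by simpa using hv0, fun w hw => ?_⟩
    obtain ⟨c, hc⟩ := hv ⟨w, hw⟩
    exact ⟨c, congrArg Subtype.val hc⟩
  let e := hfin.toFinset.equivFin
  have he : ∀ i, IsFlat H (e.symm i : Submodule ℝ V) ∧ Module.finrank ℝ (e.symm i : Submodule ℝ V) = 1 :=
    fun i => hfin.mem_toFinset.1 (e.symm i).2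
  choose v hvl hv0 hvs using fun i => hv _ (he i).2
  refine ⟨_, v, hv0, fun f g => ?_⟩
  simp only [← sign_aux]
  constructor
  · intro h i
    exact h _ (he i).1 (he i).2 _ (hvl i)
  · intro h l h1 h2 w hw
    have hl : l ∈ hfin.toFinset := by simpa using ⟨h1, h2⟩
    obtain ⟨c, rfl⟩ := hvs (e ⟨l, hl⟩) w (by simpa using hw)
    have := h (e ⟨l, hl⟩)
    rw [sign_aux] at this ⊢
    simp [sign_mul, this]

/-- Elementary perturbation: signs are stable where nonzero. -/
theorem sign_pert {a b : ℝ} (h : a ≠ 0 → SignType.sign b = SignType.sign a) {ε : ℝ} (hε : 0 < ε) :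
    SignType.sign (a + ε * b) = SignType.sign b := by
  rcases lt_trichotomy a 0 with ha | ha | ha
  · have h1 := h ha.ne
    rw [sign_neg ha] at h1
    rw [h1, sign_eq_neg_one_iff]
    have hb := sign_eq_neg_one_iff.1 h1
    nlinarith
  · simp [ha, sign_mul, sign_pos hε]
  · have h1 := h ha.ne'
    rw [sign_pos ha] at h1
    rw [h1, sign_eq_one_iff]
    have hb := sign_eq_one_iff.1 h1
    nlinarith

theorem sign_open {a : ℝ} (ha : a ≠ 0) : IsOpen {b : ℝ | SignType.sign b = SignType.sign a} := by
  rcases lt_or_gt_of_ne ha with h | h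
  · simp only [sign_neg h, sign_eq_neg_one_iff]
    exact isOpen_Iio
  · simp only [sign_pos h, sign_eq_one_iff]
    exact isOpen_Ioi

theorem span_face {V : Type*} [NormedAddCommGroup V] [NormedSpace ℝ V]
    [FiniteDimensional ℝ V] {m : ℕ} (v : Fin m → V) (h : V →L[ℝ] ℝ) :
    Module.finrank ℝ (Submodule.span ℝ {g : V →L[ℝ] ℝ | ∀ i, SignType.sign (g (v i)) = SignType.sign (h (v i))})
     = dimZ (fun i => ContinuousLinearMap.apply ℝ ℝ (v i)) ⊤ (fun i => SignType.sign (h (v i))) := by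
  refine congrArg (fun Q : Submodule ℝ (V →L[ℝ] ℝ) => Module.finrank ℝ Q) ?_
  apply le_antisymm
  · rw [Submodule.span_le]
    intro g hg
    simp only [Set.mem_ofPred_eq] at hg
    simp only [SetLike.mem_coe, Submodule.mem_inf, Submodule.mem_top, true_and, Submodule.mem_iInf]
    intro i hi
    rw [← hg i, sign_eq_zero_iff] at hi
    exact hi
  · intro p hp
    simp only [Submodule.mem_inf, Submodule.mem_top, true_and, Submodule.mem_iInf] at hp
    have hp' : ∀ i, h (v i) = 0 → p (v i) = 0 := fun i hi => hp i (by simp [hi])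
    have hev : ∀ᶠ t : ℝ in nhds 0, ∀ i, SignType.sign ((h + t • p) (v i)) = SignType.sign (h (v i)) := by
      rw [Filter.eventually_all]
      intro i
      by_cases hi : h (v i) = 0
      · simp [hi, hp' i hi]
      · have hc : Continuous (fun t : ℝ => (h + t • p) (v i)) := by
          simp only [add_apply, smul_apply]
          fun_prop
        have ht := hc.tendsto 0
        exact ht.eventually ((sign_open hi).mem_nhds (by simp))
    obtain ⟨ε, hε, hb⟩ := Metric.eventually_nhds_iff.1 hev
    have h1 := hb (y := ε / 2) (by simp [abs_of_pos hε]; linarith)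
    have m1 : h + (ε/2) • p ∈ Submodule.span ℝ {g : V →L[ℝ] ℝ | ∀ i, SignType.sign (g (v i)) = SignType.sign (h (v i))} :=
      Submodule.subset_span h1
    have m2 : h ∈ Submodule.span ℝ {g : V →L[ℝ] ℝ | ∀ i, SignType.sign (g (v i)) = SignType.sign (h (v i))} :=
      Submodule.subset_span (fun i => rfl)
    have m3 := Submodule.smul_mem _ (ε/2)⁻¹ (Submodule.sub_mem _ m1 m2)
    rwa [add_sub_cancel_left, smul_smul, inv_mul_cancel₀ (by positivity), one_smul] at m3

theorem closure_face {V : Type*} [NormedAddCommGroup V] [NormedSpace ℝ V]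
    {m : ℕ} (v : Fin m → V) (f h : V →L[ℝ] ℝ) :
    {g : V →L[ℝ] ℝ | ∀ i, SignType.sign (f (v i)) = SignType.sign (g (v i))} ⊆
      closure {g : V →L[ℝ] ℝ | ∀ i, SignType.sign (h (v i)) = SignType.sign (g (v i))} ↔
    ∀ i, f (v i) ≠ 0 → SignType.sign (h (v i)) = SignType.sign (f (v i)) := by
  constructor
  · intro hs i hi
    have hf := hs (show f ∈ _ from fun i => rfl)
    have hc : Continuous (fun g : V →L[ℝ] ℝ => g (v i)) :=
      (ContinuousLinearMap.apply ℝ ℝ (v i)).continuous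
    obtain ⟨g, hg1, hg2⟩ := mem_closure_iff.1 hf _ ((sign_open hi).preimage hc) rfl
    exact (hg2 i).trans hg1
  · intro hs g hg
    simp only [Set.mem_ofPred_eq] at hg
    have hcont : Filter.Tendsto (fun t : ℝ => g + t • h) (nhdsWithin 0 (Set.Ioi 0)) (nhds g) := by
      have : Continuous (fun t : ℝ => g + t • h) := by fun_prop
      simpa using (this.tendsto 0).mono_left nhdsWithin_le_nhds
    refine mem_closure_of_tendsto hcont ?_
    filter_upwards [self_mem_nhdsWithin] with t ht i
    simp only [add_apply, smul_apply, smul_eq_mul]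
    refine (sign_pert (fun hgi => ?_) ht).symm
    rw [← hg i]
    apply hs
    rw [← sign_ne_zero, hg i, sign_ne_zero]
    exact hgi

theorem exists_generic {V : Type*} [NormedAddCommGroup V] [NormedSpace ℝ V]
    [FiniteDimensional ℝ V] {m : ℕ} (v : Fin m → V) (hv : ∀ i, v i ≠ 0)
    (O : Set (V →L[ℝ] ℝ)) (hO : IsOpen O) (hne : O.Nonempty) :
    ∃ g ∈ O, ∀ i, g (v i) ≠ 0 := by
  have hd : Dense (⋂ i, {g : V →L[ℝ] ℝ | g (v i) ≠ 0}) := by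
    refine dense_iInter_of_isOpen (fun i => ?_) (fun i => ?_)
    · exact isOpen_ne.preimage (ContinuousLinearMap.apply ℝ ℝ (v i)).continuous
    · obtain ⟨p, -, hp⟩ := exists_dual_vector ℝ (v i) (norm_ne_zero_iff.2 (hv i))
      have hp' : p (v i) ≠ 0 := by
        rw [hp]; simpa using hv i
      intro g
      have hcont : Filter.Tendsto (fun t : ℝ => g + t • p) (nhdsWithin 0 {0}ᶜ) (nhds g) := by
        have : Continuous (fun t : ℝ => g + t • p) := by fun_prop
        simpa using (this.tendsto 0).mono_left nhdsWithin_le_nhds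
      by_cases hg : g (v i) = 0
      · refine mem_closure_of_tendsto hcont ?_
        filter_upwards [self_mem_nhdsWithin] with t ht
        have ht' : t ≠ 0 := ht
        simp [hg, ht', hp']
      · exact subset_closure hg
  obtain ⟨g, hg, hg'⟩ := hd.inter_open_nonempty O hO hne
  exact ⟨g, hg, by simpa using hg'⟩

/-- inclusion–exclusion for small dual cones: for every dual face `A∨`
and every `x ∈ V`,
`1_{V(A∨)}(x) = Σ_{B∨ ≥ A∨} (−1)^{n − dim B∨} · 1_{U(B∨)}(x)`. -/
theorem statement7 {V : Type*} [NormedAddCommGroup V] [NormedSpace ℝ V]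
    [FiniteDimensional ℝ V] (H : Finset (Submodule ℝ V))
    (hHyp : ∀ W ∈ H, ∃ f : V →ₗ[ℝ] ℝ, f ≠ 0 ∧ LinearMap.ker f = W)
    (hEss : (⋂ W ∈ H, (W : Set V)) = {0})
    (A : Set (V →L[ℝ] ℝ)) (hA : IsDualFace H A)
    (F : Finset (Set (V →L[ℝ] ℝ)))
    (hF : ∀ B : Set (V →L[ℝ] ℝ), B ∈ F ↔ IsDualFace H B ∧ A ⊆ closure B)
    (x : V) :
    Set.indicator (smallCone H A) (fun _ => (1 : ℤ)) x =
      ∑ B ∈ F,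
        (-1 : ℤ) ^ (Module.finrank ℝ V - Module.finrank ℝ (Submodule.span ℝ B)) *
          Set.indicator (bigCone B) (fun _ => (1 : ℤ)) x := by
  classical
  clear hHyp hEss
  obtain ⟨m, v, hv0, hv⟩ := exists_vecs H
  obtain ⟨f, rfl⟩ := hA
  simp only [IsDualFace, hv] at hF
  -- the open star
  let S : Set (V →L[ℝ] ℝ) := {g | ∀ i, f (v i) ≠ 0 → SignType.sign (g (v i)) = SignType.sign (f (v i))}
  have hSmem : ∀ g, g ∈ S ↔ ∀ i, f (v i) ≠ 0 → SignType.sign (g (v i)) = SignType.sign (f (v i)) :=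
    fun g => Iff.rfl
  have hSeq : S = ⋂ i, {g | f (v i) ≠ 0 → SignType.sign (g (v i)) = SignType.sign (f (v i))} := by
    ext g; simp [hSmem]
  have hSo : IsOpen S := by
    rw [hSeq]
    refine isOpen_iInter_of_finite fun i => ?_
    by_cases hi : f (v i) = 0
    · simp [hi]
    · simp only [ne_eq, hi, not_false_eq_true, forall_true_left]
      exact (sign_open hi).preimage (ContinuousLinearMap.apply ℝ ℝ (v i)).continuous
  have hSc : Convex ℝ S := by
    rw [hSeq]
    refine convex_iInter fun i => ?_
    rcases lt_trichotomy (f (v i)) 0 with hi | hi | hi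
    · simp only [ne_eq, hi.ne, not_false_eq_true, forall_true_left, sign_neg hi, sign_eq_neg_one_iff]
      exact convex_halfSpace_lt (ContinuousLinearMap.apply ℝ ℝ (v i)).isLinear 0
    · simp [hi, convex_univ]
    · simp only [ne_eq, hi.ne', not_false_eq_true, forall_true_left, sign_pos hi, sign_eq_one_iff]
      exact convex_halfSpace_gt (ContinuousLinearMap.apply ℝ ℝ (v i)).isLinear 0
  have hfS : f ∈ S := fun i _ => rfl
  let N : Set (V →L[ℝ] ℝ) := {g | g x < 0}
  have hNo : IsOpen N := isOpen_Iio.preimage (ContinuousLinearMap.apply ℝ ℝ x).continuous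
  have hNc : Convex ℝ N := convex_halfSpace_lt (ContinuousLinearMap.apply ℝ ℝ x).isLinear 0
  -- the small cone
  have hsmall : x ∈ smallCone H {g | DualSameFace H f g} ↔ ¬ ∃ g ∈ S ∩ N, g ∈ (⊤ : Submodule ℝ (V →L[ℝ] ℝ)) := by
    simp only [smallCone, IsDualChamber, IsDualFace, hv, Set.mem_iInter, Set.mem_ofPred_eq]
    constructor
    · rintro hx ⟨g, hg, -⟩
      obtain ⟨g, ⟨hgS, hgN⟩, hg0⟩ := exists_generic v hv0 _ (hSo.inter hNo) ⟨g, hg⟩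
      have := hx {k | ∀ i, SignType.sign (g (v i)) = SignType.sign (k (v i))} ⟨⟨⟨g, rfl⟩, ?_⟩, ?_⟩ g (fun i => rfl)
      · exact absurd hgN (not_lt.2 this)
      · have : {k : V →L[ℝ] ℝ | ∀ i, SignType.sign (g (v i)) = SignType.sign (k (v i))} =
            ⋂ i, {k | SignType.sign (k (v i)) = SignType.sign (g (v i))} := by
          ext k; simp [eq_comm]
        rw [this]
        exact isOpen_iInter_of_finite fun i =>
          (sign_open (hg0 i)).preimage (ContinuousLinearMap.apply ℝ ℝ (v i)).continuous
      · exact (closure_face v f g).2 hgS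
    · rintro hx B ⟨⟨⟨g, rfl⟩, -⟩, hcl⟩ k hk
      rw [closure_face] at hcl
      by_contra hneg
      refine hx ⟨k, ⟨fun i hi => ?_, not_le.1 hneg⟩, trivial⟩
      rw [← hcl i hi, hk i]
  -- sign vectors
  let T : Finset (Fin m → SignType) :=
    Finset.univ.filter (fun σ => ∃ g ∈ S, g ∈ (⊤ : Submodule ℝ (V →L[ℝ] ℝ)) ∧
      ∀ i, SignType.sign (ContinuousLinearMap.apply ℝ ℝ (v i) g) = σ i)
  let φ : (Fin m → SignType) → Set (V →L[ℝ] ℝ) := fun σ => {k | ∀ i, σ i = SignType.sign (k (v i))}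
  have hT : ∀ σ, σ ∈ T ↔ ∃ g ∈ S, σ = fun i => SignType.sign (g (v i)) := by
    intro σ
    simp only [T, Finset.mem_filter, Finset.mem_univ, true_and, Submodule.mem_top, ContinuousLinearMap.apply_apply]
    exact exists_congr fun g => and_congr_right fun _ =>
      ⟨fun h => funext fun i => (h i).symm, fun h i => (congrFun h i).symm⟩
  have hFT : F = T.image φ := by
    ext B
    rw [hF, Finset.mem_image]
    constructor
    · rintro ⟨⟨g, rfl⟩, hcl⟩
      rw [closure_face] at hcl
      exact ⟨_, (hT _).2 ⟨g, hcl, rfl⟩, rfl⟩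
    · rintro ⟨σ, hσ, rfl⟩
      obtain ⟨g, hg, rfl⟩ := (hT _).1 hσ
      exact ⟨⟨g, rfl⟩, (closure_face v f g).2 hg⟩
  have hinj : Set.InjOn φ T := by
    intro σ hσ τ hτ h
    obtain ⟨g, hg, rfl⟩ := (hT _).1 hσ
    have : g ∈ φ τ := h ▸ (show g ∈ φ _ from fun i => rfl)
    exact funext fun i => (this i).symm
  rw [hFT, Finset.sum_image hinj]
  have hdim : Module.finrank ℝ (V →L[ℝ] ℝ) = Module.finrank ℝ V := by
    rw [← LinearEquiv.finrank_eq (LinearMap.toContinuousLinearMap (𝕜 := ℝ) (E := V) (F' := ℝ))]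
    exact Subspace.dual_finrank_eq
  set n := Module.finrank ℝ V with hn
  let ℓ : Fin m → ((V →L[ℝ] ℝ) →L[ℝ] ℝ) := fun i => ContinuousLinearMap.apply ℝ ℝ (v i)
  have hterm : ∀ σ ∈ T, (-1 : ℤ) ^ (n - Module.finrank ℝ (Submodule.span ℝ (φ σ))) *
      Set.indicator (bigCone (φ σ)) (fun _ => (1 : ℤ)) x =
      (-1) ^ n * ((-1) ^ dimZ ℓ ⊤ σ - if (∃ g ∈ S ∩ N, g ∈ (⊤ : Submodule ℝ (V →L[ℝ] ℝ)) ∧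
      ∀ i, SignType.sign (ℓ i g) = σ i) then (-1) ^ dimZ ℓ ⊤ σ else 0) := by
    intro σ hσ
    obtain ⟨g, hg, rfl⟩ := (hT _).1 hσ
    have h1 : Module.finrank ℝ (Submodule.span ℝ (φ fun i => SignType.sign (g (v i)))) =
        dimZ ℓ ⊤ (fun i => SignType.sign (g (v i))) := by
      rw [← span_face v g]
      have : (φ fun i => SignType.sign (g (v i))) =
          {k : V →L[ℝ] ℝ | ∀ i, SignType.sign (k (v i)) = SignType.sign (g (v i))} := by
        ext k; simp [φ, eq_comm]
      rw [this]
    have h2 : dimZ ℓ ⊤ (fun i => SignType.sign (g (v i))) ≤ n := by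
      rw [← h1, ← hdim]; exact Submodule.finrank_le _
    have h3 : x ∈ bigCone (φ fun i => SignType.sign (g (v i))) ↔ ¬ (∃ k ∈ S ∩ N, k ∈ (⊤ : Submodule ℝ (V →L[ℝ] ℝ)) ∧
      ∀ i, SignType.sign (ℓ i k) = SignType.sign (g (v i))) := by
      constructor
      · rintro hx ⟨k, ⟨_, hk⟩, -, hk'⟩
        exact absurd hk (not_lt.2 (hx k fun i => (hk' i).symm))
      · intro hx k hk
        by_contra hneg
        refine hx ⟨k, ⟨fun i hi => ?_, not_le.1 hneg⟩, trivial, fun i => (hk i).symm⟩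
        rw [← hg i hi]; exact (hk i).symm
    have h4 : (-1 : ℤ) ^ (n - dimZ ℓ ⊤ (fun i => SignType.sign (g (v i)))) =
        (-1) ^ n * (-1) ^ dimZ ℓ ⊤ (fun i => SignType.sign (g (v i))) := by
      obtain ⟨d, hd⟩ := Nat.exists_eq_add_of_le h2
      rw [hd, Nat.add_sub_cancel_left, pow_add, mul_right_comm, ← mul_pow]
      simp
    rw [h1, h4, Set.indicator_apply]
    by_cases hx : x ∈ bigCone (φ fun i => SignType.sign (g (v i)))
    · rw [if_pos hx, if_neg (h3.1 hx)]; ring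
    · rw [if_neg hx, if_pos (not_not.1 (fun h => hx (h3.2 h)))]; ring
  rw [Finset.sum_congr rfl hterm, ← Finset.mul_sum, Finset.sum_sub_distrib]
  have e1 := euler_aux m ℓ ⊤ S hSo hSc
  have e2 := euler_aux m ℓ ⊤ (S ∩ N) (hSo.inter hNo) (hSc.inter hNc)
  rw [← Finset.sum_filter, if_pos ⟨f, hfS, trivial⟩, finrank_top, hdim] at e1
  have e1' : ∑ σ ∈ T, (-1 : ℤ) ^ dimZ ℓ ⊤ σ = (-1) ^ n := e1
  rw [finrank_top, hdim] at e2
  have e2' : (∑ σ ∈ T, if (∃ g ∈ S ∩ N, g ∈ (⊤ : Submodule ℝ (V →L[ℝ] ℝ)) ∧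
      ∀ i, SignType.sign (ℓ i g) = σ i) then (-1 : ℤ) ^ dimZ ℓ ⊤ σ else 0) =
      if ∃ g ∈ S ∩ N, g ∈ (⊤ : Submodule ℝ (V →L[ℝ] ℝ)) then (-1) ^ n else 0 := by
    rw [← e2]
    refine Finset.sum_subset (Finset.subset_univ _) ?_
    intro σ _ hσ
    refine if_neg ?_
    rintro ⟨g, ⟨hg, _⟩, -, hg'⟩
    exact hσ ((hT σ).2 ⟨g, hg, funext fun i => (hg' i).symm⟩)
  have hsq : (-1 : ℤ) ^ n * (-1) ^ n = 1 := by rw [← mul_pow]; simp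
  rw [e1', e2', Set.indicator_apply]
  by_cases hx : ∃ g ∈ S ∩ N, g ∈ (⊤ : Submodule ℝ (V →L[ℝ] ℝ))
  · rw [if_pos hx, if_neg (fun h => hsmall.1 h hx)]; ring
  · rw [if_neg hx, if_pos (hsmall.2 hx), sub_zero, hsq]
end
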